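/- Let (X,𝔸,μ) be a measure space, τ : X → X a non-singular measurable transformation, φ an Orlicz function satisfying the Δ₂-condition for all s > 0, and h a weight function. For a measurable set A ∈ 𝔸 with 0 < μ(A) < ∞, set g_A := φ⁻¹(1/∫₀^{μ(A)} h(t) dt) · χ_A. Then ‖g_A‖_{φ,h} = 1, and for every n ∈ ℕ with 0 < μ(τ⁻ⁿ(A)) < ∞ one has ‖C_τⁿ g_A‖_{φ,h} = φ⁻¹(1/∫₀^{μ(A)} h(t) dt) / φ⁻¹(1/∫₀^{μ(τ⁻ⁿ(A))} h(t) dt). -/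

import Mathlib

/-!
The norm of a multiple `a χ_B` of a characteristic function can be computed explicitly. Its
rearrangement is `a` on `[0, μ(B))` and `0` afterwards, and `φ(0) = 0`, so the modular of
`a χ_B / l` is `φ(a / l) · ∫₀^{μ(B)} h` (`olModular_indicator`). Hence the Luxemburg norm is the
infimum of the `l > 0` with `φ(a / l) ≤ (∫₀^{μ(B)} h)⁻¹`. Since `φ` is monotone, this condition
holds when `a / l < φ⁻¹((∫₀^{μ(B)} h)⁻¹)` and forces `a / l ≤ φ⁻¹((∫₀^{μ(B)} h)⁻¹)`, which
determines the infimum as `a / φ⁻¹((∫₀^{μ(B)} h)⁻¹)` (`olNorm_indicator`).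

Both claims are instances of this formula with `a = φ⁻¹((∫₀^{μ(A)} h)⁻¹)`: the first with `B = A`,
the second with `B = τ⁻ⁿ(A)`, because `χ_A ∘ τⁿ = χ_{τ⁻ⁿ(A)}`.
-/

open MeasureTheory Filter Set
open scoped ENNReal NNReal

noncomputable section

/-- The generalized inverse `φ⁻¹(u) = sup {s ≥ 0 : φ(s) ≤ u}` of an Orlicz function. -/
def orliczInv (φ : ℝ≥0∞ → ℝ≥0∞) (u : ℝ≥0∞) : ℝ≥0∞ :=
  ⨆ (s : ℝ≥0) (_ : φ (s : ℝ≥0∞) ≤ u), (s : ℝ≥0∞)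

/-- An Orlicz function: convex on `[0,∞)` (viewed inside `ℝ≥0∞`), vanishing at `0`,
tending to `∞` at `∞`, and finite at some positive point. -/
structure IsOrliczFunction (φ : ℝ≥0∞ → ℝ≥0∞) : Prop where
  map_zero : φ 0 = 0
  convex : ∀ (x y a b : ℝ≥0), a + b = 1 →
    φ ((a * x + b * y : ℝ≥0) : ℝ≥0∞) ≤ (a : ℝ≥0∞) * φ (x : ℝ≥0∞) + (b : ℝ≥0∞) * φ (y : ℝ≥0∞)
  tendsto_top : Filter.Tendsto (fun s : ℝ≥0 => φ (s : ℝ≥0∞)) Filter.atTop (nhds ⊤)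
  exists_pos_finite : ∃ s : ℝ≥0, 0 < s ∧ φ (s : ℝ≥0∞) < ⊤

/-- The Δ₂-condition for all `s > 0`: `φ(2s) ≤ M φ(s)` for some constant `M > 0`. -/
def Delta2All (φ : ℝ≥0∞ → ℝ≥0∞) : Prop :=
  ∃ M : ℝ≥0, 0 < M ∧ ∀ s : ℝ≥0, 0 < s →
    φ ((2 * s : ℝ≥0) : ℝ≥0∞) ≤ (M : ℝ≥0∞) * φ (s : ℝ≥0∞)

variable {X : Type*}

/-- A weight function on `K = [0, μ(X)]`: measurable, positive, finite,
non-increasing and locally integrable on `K`. -/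
structure IsWeight [MeasurableSpace X] (μ : Measure X) (h : ℝ → ℝ≥0∞) : Prop where
  measurable : Measurable h
  pos : ∀ t : ℝ, 0 ≤ t → ENNReal.ofReal t ≤ μ Set.univ → 0 < h t
  lt_top : ∀ t : ℝ, 0 ≤ t → ENNReal.ofReal t ≤ μ Set.univ → h t < ⊤
  antitone : ∀ s t : ℝ, 0 ≤ s → s ≤ t → ENNReal.ofReal t ≤ μ Set.univ → h t ≤ h s
  locally_integrable : ∀ c : ℝ, 0 ≤ c → ENNReal.ofReal c ≤ μ Set.univ →
    (∫⁻ t in Set.Ioc (0 : ℝ) c, h t) < ⊤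

/-- `∫₀^c h(t) dt`, for an extended-real upper limit `c`. -/
def weightInt (h : ℝ → ℝ≥0∞) (c : ℝ≥0∞) : ℝ≥0∞ :=
  ∫⁻ t in {t : ℝ | 0 < t ∧ ENNReal.ofReal t < c}, h t

/-- The non-increasing rearrangement `g*(t) = inf {λ : μ(|g| > λ) ≤ t}`. -/
def decRearr [MeasurableSpace X] (μ : Measure X) (g : X → ℝ) (t : ℝ) : ℝ≥0∞ :=
  sInf {l : ℝ≥0∞ | μ {x | l < ENNReal.ofReal |g x|} ≤ ENNReal.ofReal t}

/-- The Orlicz–Lorentz modular `I_{φ,h}(c·g) = ∫_K φ(c g*(t)) h(t) dt`, `K = [0, μ(X)]`. -/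
def olModular [MeasurableSpace X] (φ : ℝ≥0∞ → ℝ≥0∞) (h : ℝ → ℝ≥0∞) (μ : Measure X)
    (g : X → ℝ) (c : ℝ≥0∞) : ℝ≥0∞ :=
  ∫⁻ t in {t : ℝ | 0 < t ∧ ENNReal.ofReal t < μ Set.univ}, φ (c * decRearr μ g t) * h t

/-- The Orlicz–Lorentz (Luxemburg) norm `‖g‖_{φ,h} = inf {λ > 0 : I_{φ,h}(g/λ) ≤ 1}`. -/
def olNorm [MeasurableSpace X] (φ : ℝ≥0∞ → ℝ≥0∞) (h : ℝ → ℝ≥0∞) (μ : Measure X)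
    (g : X → ℝ) : ℝ≥0∞ :=
  sInf {l : ℝ≥0∞ | 0 < l ∧ olModular φ h μ g l⁻¹ ≤ 1}

/-- Membership in the Orlicz–Lorentz space `L^{φ,h}(μ)`. -/
def MemOL [MeasurableSpace X] (φ : ℝ≥0∞ → ℝ≥0∞) (h : ℝ → ℝ≥0∞) (μ : Measure X)
    (g : X → ℝ) : Prop :=
  AEMeasurable g μ ∧ ∃ c : ℝ≥0, 0 < c ∧ olModular φ h μ g (c : ℝ≥0∞) < ⊤

/-- A non-singular measurable transformation: `μ(A) = 0 → μ(τ⁻¹(A)) = 0`. -/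
def NonSingular [MeasurableSpace X] (μ : Measure X) (τ : X → X) : Prop :=
  Measurable τ ∧ ∀ A : Set X, MeasurableSet A → μ A = 0 → μ (τ ⁻¹' A) = 0

/-- The composition operator `C_τ g = g ∘ τ` is a bounded linear operator on `L^{φ,h}(μ)`. -/
def CompBoundedOL [MeasurableSpace X] (φ : ℝ≥0∞ → ℝ≥0∞) (h : ℝ → ℝ≥0∞) (μ : Measure X)
    (τ : X → X) : Prop :=
  (∀ g : X → ℝ, MemOL φ h μ g → MemOL φ h μ (g ∘ τ)) ∧
  ∃ M : ℝ≥0∞, M < ⊤ ∧ ∀ g : X → ℝ, MemOL φ h μ g →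
    olNorm φ h μ (g ∘ τ) ≤ M * olNorm φ h μ g

/-- `C_τ` is Li-Yorke chaotic on `L^{φ,h}(μ)`: there is an uncountable set `S` of
(representatives of pairwise distinct) points of `L^{φ,h}(μ)` such that every pair of
distinct points of `S` is a Li-Yorke pair for `C_τ`. -/
def LiYorkeOL [MeasurableSpace X] (φ : ℝ≥0∞ → ℝ≥0∞) (h : ℝ → ℝ≥0∞) (μ : Measure X)
    (τ : X → X) : Prop :=
  ∃ S : Set (X → ℝ),
    (∀ g ∈ S, MemOL φ h μ g) ∧
    ¬ S.Countable ∧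
    (∀ p ∈ S, ∀ q ∈ S, p ≠ q → ¬ p =ᵐ[μ] q) ∧
    ∀ p ∈ S, ∀ q ∈ S, p ≠ q →
      Filter.liminf (fun n : ℕ => olNorm φ h μ ((p - q) ∘ τ^[n])) Filter.atTop = 0 ∧
      0 < Filter.limsup (fun n : ℕ => olNorm φ h μ ((p - q) ∘ τ^[n])) Filter.atTop

/-- `g` is a semi-irregular vector for `C_τ` on `L^{φ,h}(μ)`. -/
def SemiIrregularOL [MeasurableSpace X] (φ : ℝ≥0∞ → ℝ≥0∞) (h : ℝ → ℝ≥0∞) (μ : Measure X)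
    (τ : X → X) (g : X → ℝ) : Prop :=
  MemOL φ h μ g ∧
  Filter.liminf (fun n : ℕ => olNorm φ h μ (g ∘ τ^[n])) Filter.atTop = 0 ∧
  0 < Filter.limsup (fun n : ℕ => olNorm φ h μ (g ∘ τ^[n])) Filter.atTop


/-- Convexity together with `φ 0 = 0` gives sublinearity under contractions. -/
lemma IsOrliczFunction.map_mul_le {φ : ℝ≥0∞ → ℝ≥0∞} (hφ : IsOrliczFunction φ)
    {a : ℝ≥0} (ha : a ≤ 1) (x : ℝ≥0) :
    φ ((a * x : ℝ≥0) : ℝ≥0∞) ≤ (a : ℝ≥0∞) * φ (x : ℝ≥0∞) := by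
  have h := hφ.convex x 0 a (1 - a) (add_tsub_cancel_of_le ha)
  simpa [hφ.map_zero] using h

lemma IsOrliczFunction.mono {φ : ℝ≥0∞ → ℝ≥0∞} (hφ : IsOrliczFunction φ)
    {x y : ℝ≥0} (hxy : x ≤ y) : φ (x : ℝ≥0∞) ≤ φ (y : ℝ≥0∞) := by
  rcases eq_or_ne y 0 with rfl | hy
  · rw [le_antisymm hxy (zero_le)]
  have h1 : x / y ≤ 1 := div_le_one_of_le₀ hxy zero_le
  have h := hφ.map_mul_le h1 y
  rw [div_mul_cancel₀ x hy] at h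
  exact h.trans (mul_le_of_le_one_left zero_le (by exact_mod_cast h1))

/-- Finiteness of `φ⁻¹(u)` comes from `φ(s) → ∞`. -/
lemma orliczInv_lt_top {φ : ℝ≥0∞ → ℝ≥0∞} (hφ : IsOrliczFunction φ) {u : ℝ≥0∞} (hu : u < ⊤) :
    orliczInv φ u < ⊤ := by
  obtain ⟨N, hN⟩ := (hφ.tendsto_top.eventually (lt_mem_nhds hu)).exists
  refine lt_of_le_of_lt (iSup₂_le fun s hs => ?_) (ENNReal.coe_lt_top (r := N))
  by_contra! hlt
  exact absurd (hN.trans_le (hφ.mono (by exact_mod_cast hlt.le))) (not_lt.2 hs)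

/-- Positivity of `φ⁻¹(u)` comes from `φ(ε s) ≤ ε φ(s)` at a point `s` where `φ` is finite. -/
lemma orliczInv_pos {φ : ℝ≥0∞ → ℝ≥0∞} (hφ : IsOrliczFunction φ) {u : ℝ≥0∞} (hu : 0 < u) :
    0 < orliczInv φ u := by
  obtain ⟨s, hs, hfin⟩ := hφ.exists_pos_finite
  obtain ⟨ε, hε, hlt⟩ := ENNReal.exists_nnreal_pos_mul_lt hfin.ne hu.ne'
  have hle : φ ((min ε 1 * s : ℝ≥0) : ℝ≥0∞) ≤ u :=
    (hφ.map_mul_le (min_le_right _ _) s).trans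
      ((mul_le_mul_left (by exact_mod_cast min_le_left ε 1) _).trans hlt.le)
  have hpos : 0 < min ε 1 * s := mul_pos (lt_min hε one_pos) hs
  exact lt_of_lt_of_le (by exact_mod_cast hpos)
    (le_iSup₂ (f := fun (s : ℝ≥0) (_ : φ (s : ℝ≥0∞) ≤ u) => (s : ℝ≥0∞)) _ hle)

/-- Half of the duality between `φ` and `φ⁻¹`. The inequality `x < φ⁻¹(u)` is strict because `φ`
is not assumed left-continuous. -/
lemma le_of_lt_orliczInv {φ : ℝ≥0∞ → ℝ≥0∞} (hφ : IsOrliczFunction φ) {u x : ℝ≥0∞}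
    (hx : x < orliczInv φ u) : φ x ≤ u := by
  obtain ⟨s, hs⟩ := lt_iSup_iff.1 hx
  obtain ⟨hsu, hxs⟩ := lt_iSup_iff.1 hs
  lift x to ℝ≥0 using hxs.ne_top
  exact (hφ.mono (by exact_mod_cast hxs.le)).trans hsu

/-- The other half of the duality. The value of `φ` at `⊤` is arbitrary, so `x` must be finite. -/
lemma le_orliczInv {φ : ℝ≥0∞ → ℝ≥0∞} {u x : ℝ≥0∞} (hx : x ≠ ⊤) (h : φ x ≤ u) :
    x ≤ orliczInv φ u := by
  lift x to ℝ≥0 using hx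
  exact le_iSup₂ (f := fun (s : ℝ≥0) (_ : φ (s : ℝ≥0∞) ≤ u) => (s : ℝ≥0∞)) x h

lemma measurableSet_Ioo_ofReal (c : ℝ≥0∞) :
    MeasurableSet {t : ℝ | 0 < t ∧ ENNReal.ofReal t < c} :=
  measurableSet_Ioi.inter (measurableSet_lt ENNReal.measurable_ofReal measurable_const)

lemma weightInt_pos [MeasurableSpace X] {μ : Measure X} {h : ℝ → ℝ≥0∞} (hh : IsWeight μ h)
    {B : Set X} (hB0 : 0 < μ B) : 0 < weightInt h (μ B) := by
  rw [weightInt, setLIntegral_pos_iff hh.measurable]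
  obtain ⟨r, hr0, hr⟩ := ENNReal.lt_iff_exists_nnreal_btwn.1 hB0
  have hr0' : (0 : ℝ) < r := by exact_mod_cast hr0
  refine lt_of_lt_of_le (b := volume (Ioo (0 : ℝ) r)) (by simpa using hr0') (measure_mono ?_)
  rintro t ⟨ht0, htr⟩
  have ht : ENNReal.ofReal t < μ B :=
    (ENNReal.ofReal_le_ofReal htr.le).trans_lt (by simpa using hr)
  exact ⟨(hh.pos t ht0.le (ht.le.trans (measure_mono (subset_univ B)))).ne', ht0, ht⟩

lemma weightInt_lt_top [MeasurableSpace X] {μ : Measure X} {h : ℝ → ℝ≥0∞} (hh : IsWeight μ h)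
    {B : Set X} (hB : μ B < ⊤) : weightInt h (μ B) < ⊤ := by
  refine lt_of_le_of_lt (lintegral_mono_set ?_)
    (hh.locally_integrable (μ B).toReal ENNReal.toReal_nonneg ?_)
  · rintro t ⟨ht0, ht⟩
    exact ⟨ht0, ((ENNReal.ofReal_lt_iff_lt_toReal ht0.le hB.ne).1 ht).le⟩
  · rw [ENNReal.ofReal_toReal hB.ne]
    exact measure_mono (subset_univ B)

open Classical in
/-- The rearrangement of `a χ_B` equals `a` on `[0, μ B)` and vanishes afterwards. -/
lemma decRearr_indicator [MeasurableSpace X] (μ : Measure X) (B : Set X) {a : ℝ≥0∞}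
    (ha : a ≠ ⊤) (t : ℝ) :
    decRearr μ (fun x => a.toReal * B.indicator (fun _ => (1 : ℝ)) x) t =
      if ENNReal.ofReal t < μ B then a else 0 := by
  have key : ∀ x, ENNReal.ofReal |a.toReal * B.indicator (fun _ => (1 : ℝ)) x| =
      B.indicator (fun _ => a) x := by
    intro x
    by_cases hx : x ∈ B <;> simp [hx, ha]
  unfold decRearr
  simp only [key]
  split_ifs with ht
  · apply le_antisymm
    · refine sInf_le ?_
      have : {x | a < B.indicator (fun _ => a) x} = ∅ := by
        ext x
        by_cases hx : x ∈ B <;> simp [hx]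
      simp [this]
    · refine le_sInf fun l hl => ?_
      by_contra! hla
      refine absurd (ht.trans_le ((measure_mono ?_).trans hl)) (lt_irrefl _)
      intro x hx
      simpa [hx] using hla
  · refine le_antisymm (sInf_le ?_) zero_le
    refine (measure_mono fun x hx => ?_).trans (not_lt.1 ht)
    by_contra hxB
    simp [hxB] at hx

/-- The modular also sees the region `μ B ≤ t < μ X`, where the integrand is `φ 0 * h t = 0`. -/
lemma olModular_indicator [MeasurableSpace X] {μ : Measure X} {φ : ℝ≥0∞ → ℝ≥0∞}
    {h : ℝ → ℝ≥0∞} (hφ : IsOrliczFunction φ) (hh : IsWeight μ h) (B : Set X) {a : ℝ≥0∞}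
    (ha : a ≠ ⊤) (c : ℝ≥0∞) :
    olModular φ h μ (fun x => a.toReal * B.indicator (fun _ => (1 : ℝ)) x) c =
      φ (c * a) * weightInt h (μ B) := by
  classical
  unfold olModular weightInt
  rw [← lintegral_const_mul _ hh.measurable, ← lintegral_indicator (measurableSet_Ioo_ofReal _),
    ← lintegral_indicator (measurableSet_Ioo_ofReal _)]
  congr 1 with t
  have hle : μ B ≤ μ univ := measure_mono (subset_univ B)
  simp_rw [decRearr_indicator μ B ha]
  simp only [indicator_apply, mem_ofPred_eq]
  by_cases ht0 : 0 < t <;> by_cases htB : ENNReal.ofReal t < μ B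
  · simp [ht0, htB, htB.trans_le hle]
  · simp [htB, hφ.map_zero]
  · simp [ht0]
  · simp [ht0]

/-- The norm formula `‖a χ_B‖ = a / φ⁻¹((∫₀^{μ(B)} h)⁻¹)`, from which both claims follow. -/
lemma olNorm_indicator [MeasurableSpace X] {μ : Measure X} {φ : ℝ≥0∞ → ℝ≥0∞}
    {h : ℝ → ℝ≥0∞} (hφ : IsOrliczFunction φ) (hh : IsWeight μ h) {B : Set X}
    (hB0 : 0 < μ B) (hB : μ B < ⊤) {a : ℝ≥0∞} (ha : a ≠ ⊤) :
    olNorm φ h μ (fun x => a.toReal * B.indicator (fun _ => (1 : ℝ)) x) =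
      a / orliczInv φ (weightInt h (μ B))⁻¹ := by
  have hW0 := (weightInt_pos hh hB0).ne'
  have hW := (weightInt_lt_top hh hB).ne
  have hb0 := (orliczInv_pos hφ (ENNReal.inv_pos.2 hW)).ne'
  have hb := (orliczInv_lt_top hφ (ENNReal.inv_lt_top.2 hW0.bot_lt)).ne
  have hiff : ∀ l : ℝ≥0∞, olModular φ h μ
      (fun x => a.toReal * B.indicator (fun _ => (1 : ℝ)) x) l⁻¹ ≤ 1 ↔
      φ (a / l) ≤ (weightInt h (μ B))⁻¹ := by
    intro l
    rw [olModular_indicator hφ hh B ha, ← ENNReal.div_eq_inv_mul,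
      ← ENNReal.le_div_iff_mul_le (Or.inl hW0) (Or.inl hW), one_div]
  unfold olNorm
  simp only [hiff]
  set b := orliczInv φ (weightInt h (μ B))⁻¹ with hbdef
  apply le_antisymm
  · refine le_of_forall_gt fun l hl => ?_
    -- It suffices to find an admissible `m < l`; any `m` with `a / b < m < l` has `a / m < b`.
    obtain ⟨m, hm, hml⟩ := exists_between hl
    refine lt_of_le_of_lt (sInf_le ⟨zero_le.trans_lt hm, ?_⟩) hml
    refine le_of_lt_orliczInv hφ ?_
    rw [← hbdef]
    have hm0 : m ≠ 0 := (zero_le.trans_lt hm).ne'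
    have h1 : a < m * b := (ENNReal.div_lt_iff (Or.inl hb0) (Or.inl hb)).1 hm
    exact (ENNReal.div_lt_iff (Or.inl hm0) (Or.inl hml.ne_top)).2 (by rwa [mul_comm])
  · refine le_sInf ?_
    rintro l ⟨hl0, hl⟩
    have hle : a / l ≤ b := le_orliczInv (ENNReal.div_lt_top ha hl0.ne').ne hl
    rcases eq_or_ne l ⊤ with rfl | hlt
    · exact le_top
    have h1 := (ENNReal.div_le_iff_le_mul (Or.inl hl0.ne') (Or.inl hlt)).1 hle
    exact ENNReal.div_le_of_le_mul (by rwa [mul_comm])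

/-- The normalized characteristic function `g_A = φ⁻¹(1/∫₀^{μ(A)} h)·χ_A` has norm `1`,
and `‖C_τⁿ g_A‖_{φ,h}` equals the ratio of the inverse-Orlicz quantities. -/
theorem stmt_13 {X : Type*} [MeasurableSpace X] (μ : Measure X) (τ : X → X)
    (φ : ℝ≥0∞ → ℝ≥0∞) (h : ℝ → ℝ≥0∞)
    (hτ : NonSingular μ τ) (hφ : IsOrliczFunction φ) (hΔ : Delta2All φ)
    (hh : IsWeight μ h)
    (A : Set X) (hA : MeasurableSet A) (hA0 : 0 < μ A) (hAfin : μ A < ⊤) :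
    olNorm φ h μ
        (fun x => (orliczInv φ (weightInt h (μ A))⁻¹).toReal *
          A.indicator (fun _ => (1 : ℝ)) x) = 1 ∧
    ∀ n : ℕ, 0 < μ ((τ^[n]) ⁻¹' A) → μ ((τ^[n]) ⁻¹' A) < ⊤ →
      olNorm φ h μ
          ((fun x => (orliczInv φ (weightInt h (μ A))⁻¹).toReal *
            A.indicator (fun _ => (1 : ℝ)) x) ∘ τ^[n]) =
        orliczInv φ (weightInt h (μ A))⁻¹ /
          orliczInv φ (weightInt h (μ ((τ^[n]) ⁻¹' A)))⁻¹ := by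
  have hW0 := (weightInt_pos hh hA0).ne'
  have hW := (weightInt_lt_top hh hAfin).ne
  have ha0 := (orliczInv_pos hφ (ENNReal.inv_pos.2 hW)).ne'
  have ha := (orliczInv_lt_top hφ (ENNReal.inv_lt_top.2 hW0.bot_lt)).ne
  refine ⟨?_, fun n hn0 hn => ?_⟩
  · rw [olNorm_indicator hφ hh hA0 hAfin ha, ENNReal.div_self ha0 ha]
  -- `χ_A ∘ τⁿ` and `χ_{τ⁻ⁿ(A)}` agree by definition.
  · exact olNorm_indicator hφ hh hn0 hn ha

end
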